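/- arXiv:1409.1097 — 5 statements merged into one kernel-verified Lean document; each statement's English description precedes it below -/
import Mathlib

section
/- Let N ≥ 2 and let k_1, …, k_N be as in the context. Then ρ ≥ 3, unless N = 2 and (k_1, k_2) = (2, 3), in which case ρ = 1. -/
def rhoAux (k : ℕ → ℕ) (n : ℕ) : ℤ :=
  ((n : ℤ) - 1) * ((∏ i ∈ Finset.range n, k i : ℕ) : ℤ)
    - ∑ i ∈ Finset.range n, (((∏ i ∈ Finset.range n, k i) / k i : ℕ) : ℤ)

theorem rhoAux_succ (k : ℕ → ℕ) (n : ℕ) (hn : 0 < k n) :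
    rhoAux k (n + 1) = k n * rhoAux k n
      + ((k n : ℤ) - 1) * ((∏ i ∈ Finset.range n, k i : ℕ) : ℤ) := by
  unfold rhoAux
  rw [Finset.sum_range_succ, Finset.prod_range_succ, Nat.mul_div_cancel _ hn]
  have h : ∑ i ∈ Finset.range n, ((((∏ i ∈ Finset.range n, k i) * k n) / k i : ℕ) : ℤ)
      = k n * ∑ i ∈ Finset.range n, (((∏ i ∈ Finset.range n, k i) / k i : ℕ) : ℤ) := by
    rw [Finset.mul_sum]
    refine Finset.sum_congr rfl fun i hi => ?_
    rw [mul_comm, Nat.mul_div_assoc _ (Finset.dvd_prod_of_mem k hi), Nat.cast_mul]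
  rw [h]
  generalize (∏ i ∈ Finset.range n, k i) = P
  push_cast
  ring

theorem rhoAux_two (k : ℕ → ℕ) (h0 : 0 < k 0) (h1 : 0 < k 1) :
    rhoAux k 2 = ((k 0 : ℤ) - 1) * ((k 1 : ℤ) - 1) - 1 := by
  rw [rhoAux_succ k 1 h1, rhoAux_succ k 0 h0]
  simp [rhoAux]
  ring

theorem rhoAux_step (k : ℕ → ℕ) (n : ℕ) (hk : ∀ i < n + 1, 1 < k i)
    (h : 1 ≤ rhoAux k n) : 2 ≤ n → 3 ≤ rhoAux k (n + 1) := by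
  intro hn
  have hkn := hk n (by omega)
  rw [rhoAux_succ k n (by omega)]
  have hP : 0 < ∏ i ∈ Finset.range n, k i :=
    Finset.prod_pos fun i hi => by
      have := hk i (by have := Finset.mem_range.1 hi; omega)
      omega
  have h2 : 2 ≤ k 0 := hk 0 (by omega)
  have hP2 : 2 ≤ ∏ i ∈ Finset.range n, k i :=
    h2.trans (Nat.le_of_dvd hP (Finset.dvd_prod_of_mem k (Finset.mem_range.2 (by omega))))
  generalize (∏ i ∈ Finset.range n, k i) = P at *
  have a : (2 : ℤ) ≤ k n := by exact_mod_cast hkn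
  have b : (2 : ℤ) ≤ P := by exact_mod_cast hP2
  nlinarith

/-- Proposition 3.1(1): for pairwise coprime multiplicities `1 < k 0 < k 1 < ⋯ < k (N-1)`
(with `N ≥ 2`), setting `M = ∏ kᵢ` and `ρ = (N-1)·M - ∑ M/kᵢ`, one has `ρ ≥ 3`
unless `N = 2` and `(k 0, k 1) = (2, 3)`, in which case `ρ = 1`. -/
theorem rho_ge_three_unless_two_three
    (N : ℕ) (hN : 2 ≤ N) (k : ℕ → ℕ)
    (hk : ∀ i < N, 1 < k i)
    (hmono : ∀ i j, i < j → j < N → k i < k j)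
    (hcop : ∀ i j, i < j → j < N → Nat.Coprime (k i) (k j))
    (M : ℕ) (hM : M = ∏ i ∈ Finset.range N, k i)
    (ρ : ℤ)
    (hρ : ρ = ((N : ℤ) - 1) * (M : ℤ) - ∑ i ∈ Finset.range N, ((M / k i : ℕ) : ℤ)) :
    (¬(N = 2 ∧ k 0 = 2 ∧ k 1 = 3) → 3 ≤ ρ) ∧
    ((N = 2 ∧ k 0 = 2 ∧ k 1 = 3) → ρ = 1) := by
  subst hM
  have hρ' : ρ = rhoAux k N := hρ
  have h0 := hk 0 (by omega)
  have h1 := hk 1 (by omega)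
  have h01 := hmono 0 1 (by omega) (by omega)
  have e2 := rhoAux_two k (by omega) (by omega)
  have a : (2 : ℤ) ≤ k 0 := by exact_mod_cast h0
  have b : (k 0 : ℤ) + 1 ≤ k 1 := by exact_mod_cast h01
  have base : 1 ≤ rhoAux k 2 := by rw [e2]; nlinarith
  have key : ∀ n, 2 ≤ n → n ≤ N → 1 ≤ rhoAux k n := by
    intro n hn
    induction n, hn using Nat.le_induction with
    | base => exact fun _ => base
    | succ n hn ih =>
      intro h
      have := rhoAux_step k n (fun i hi => hk i (by omega)) (ih (by omega)) hn
      omega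
  constructor
  · intro hne
    rcases Nat.eq_or_lt_of_le hN with h | h
    · subst h
      rw [hρ', e2]
      by_cases hk0 : k 0 = 2
      · have hc := hcop 0 1 (by omega) (by omega)
        rw [hk0] at hc
        have hodd := Nat.coprime_two_left.1 hc
        obtain ⟨m, hm⟩ := hodd
        have : 5 ≤ k 1 := by
          have : k 1 ≠ 3 := fun h3 => hne ⟨rfl, hk0, h3⟩
          omega
        rw [hk0]
        push_cast
        omega
      · have a' : (3 : ℤ) ≤ k 0 := by
          have : 3 ≤ k 0 := by omega
          exact_mod_cast this
        nlinarith
    · obtain ⟨n, rfl⟩ : ∃ n, N = n + 1 := ⟨N - 1, by omega⟩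
      rw [hρ']
      exact rhoAux_step k n hk (key n (by omega) (by omega)) (by omega)
  · rintro ⟨rfl, h0', h1'⟩
    rw [hρ', e2, h0', h1']
    norm_num
end

section
/- Let N ≥ 3 and let k_1, …, k_N be as in the context. If it is not the case that N = 3 and (k_1, k_2, k_3) = (2, 3, 5), then (N−2)·M > M_1 + ⋯ + M_N (equivalently, ρ > M). Moreover, in the exceptional case N = 3, (k_1, k_2, k_3) = (2, 3, 5), one has ρ = 29. -/
/-- Upper bound for a reciprocal from a lower bound on the integer. -/
lemma inv_bound (x m : ℕ) (hm : 0 < m) (h : m ≤ x) : (1 : ℚ) / x ≤ 1 / m := by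
  apply one_div_le_one_div_of_le
  · exact_mod_cast hm
  · exact_mod_cast h

/-- Three coprime numbers other than 2, 3, 5 have reciprocal sum below one. -/
lemma three_bound (a b c : ℕ) (ha : 1 < a) (hab : a < b) (hbc : b < c)
    (h1 : Nat.Coprime a b) (h2 : Nat.Coprime a c) (h3 : Nat.Coprime b c)
    (hne : ¬(a = 2 ∧ b = 3 ∧ c = 5)) :
    (1 : ℚ) / a + 1 / b + 1 / c < 1 := by
  by_cases ha2 : a = 2
  · subst ha2
    by_cases hb3 : b = 3
    · subst hb3
      have hc4 : c ≠ 4 := by rintro rfl; revert h2; decide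
      have hc6 : c ≠ 6 := by rintro rfl; revert h2; decide
      have hc5 : c ≠ 5 := by rintro rfl; exact hne ⟨rfl, rfl, rfl⟩
      have := inv_bound c 7 (by norm_num) (by omega)
      norm_num at this ⊢
      linarith
    · have hb4 : b ≠ 4 := by rintro rfl; revert h1; decide
      have e1 := inv_bound b 5 (by norm_num) (by omega)
      have e2 := inv_bound c 6 (by norm_num) (by omega)
      norm_num at e1 e2 ⊢
      linarith
  · have e0 := inv_bound a 3 (by norm_num) (by omega)
    have e1 := inv_bound b 4 (by norm_num) (by omega)
    have e2 := inv_bound c 5 (by norm_num) (by omega)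
    norm_num at e0 e1 e2 ⊢
    linarith

/-- Proposition 3.1(2): for pairwise coprime multiplicities `1 < k 0 < ⋯ < k (N-1)`
with `N ≥ 3`, setting `M = ∏ kᵢ`, `Mᵢ = M/kᵢ`, `ρ = (N-1)·M - ∑ Mᵢ`:
if not `N = 3` with `(k 0, k 1, k 2) = (2, 3, 5)` then `(N-2)·M > ∑ Mᵢ`
(equivalently `ρ > M`); in the exceptional case one has `ρ = 29`. -/
theorem s_gt_one_unless_two_three_five
    (N : ℕ) (hN : 3 ≤ N) (k : ℕ → ℕ)
    (hk : ∀ i < N, 1 < k i)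
    (hmono : ∀ i j, i < j → j < N → k i < k j)
    (hcop : ∀ i j, i < j → j < N → Nat.Coprime (k i) (k j))
    (M : ℕ) (hM : M = ∏ i ∈ Finset.range N, k i)
    (ρ : ℤ)
    (hρ : ρ = ((N : ℤ) - 1) * (M : ℤ) - ∑ i ∈ Finset.range N, ((M / k i : ℕ) : ℤ)) :
    (¬(N = 3 ∧ k 0 = 2 ∧ k 1 = 3 ∧ k 2 = 5) →
      ((N : ℤ) - 2) * (M : ℤ) > ∑ i ∈ Finset.range N, ((M / k i : ℕ) : ℤ)) ∧
    ((N = 3 ∧ k 0 = 2 ∧ k 1 = 3 ∧ k 2 = 5) → ρ = 29) := by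
  constructor
  · intro hne
    have key : ∑ i ∈ Finset.range N, (1 : ℚ) / k i < (N : ℚ) - 2 := by
      have h01 := hmono 0 1 (by omega) (by omega)
      have h12 := hmono 1 2 (by omega) (by omega)
      have c01 := hcop 0 1 (by omega) (by omega)
      have c02 := hcop 0 2 (by omega) (by omega)
      have c12 := hcop 1 2 (by omega) (by omega)
      have h0 := hk 0 (by omega)
      have ind : ∀ m, 3 ≤ m → m ≤ N → ∑ i ∈ Finset.range m, (1 : ℚ) / k i ≤
          1 / k 0 + 1 / k 1 + 1 / k 2 + ((m : ℚ) - 3) / 2 := by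
        intro m hm
        induction m, hm using Nat.le_induction with
        | base => intro _; simp [Finset.sum_range_succ]
        | succ m hm ih =>
          intro hmN
          rw [Finset.sum_range_succ]
          have e := inv_bound (k m) 2 (by norm_num) (hk m (by omega))
          have := ih (by omega)
          push_cast at e ⊢
          linarith
      have hI := ind N hN le_rfl
      by_cases h235 : k 0 = 2 ∧ k 1 = 3 ∧ k 2 = 5
      · have hN4 : 4 ≤ N := by
          by_contra hlt
          exact hne ⟨by omega, h235⟩
        obtain ⟨a0, a1, a2⟩ := h235
        rw [a0, a1, a2] at hI
        have : (4 : ℚ) ≤ N := by exact_mod_cast hN4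
        norm_num at hI ⊢
        linarith
      · have := three_bound _ _ _ h0 h01 h12 c01 c02 c12 h235
        have h3 : (3 : ℚ) ≤ N := by exact_mod_cast hN
        linarith
    have hMpos : 0 < M := by
      rw [hM]
      apply Finset.prod_pos
      intro i hi
      have := hk i (Finset.mem_range.mp hi)
      omega
    have hMq : (0 : ℚ) < M := by exact_mod_cast hMpos
    have hsum : ((∑ i ∈ Finset.range N, ((M / k i : ℕ) : ℤ) : ℤ) : ℚ) =
        M * ∑ i ∈ Finset.range N, (1 : ℚ) / k i := by
      rw [Finset.mul_sum, Int.cast_sum]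
      apply Finset.sum_congr rfl
      intro i hi
      have hki := hk i (Finset.mem_range.mp hi)
      have hd : k i ∣ M := by rw [hM]; exact Finset.dvd_prod_of_mem k hi
      have hz : (k i : ℚ) ≠ 0 := by
        have : k i ≠ 0 := by omega
        exact_mod_cast this
      rw [Int.cast_natCast, Nat.cast_div hd hz]
      ring
    have hfin : ((∑ i ∈ Finset.range N, ((M / k i : ℕ) : ℤ) : ℤ) : ℚ) <
        ((((N : ℤ) - 2) * (M : ℤ) : ℤ) : ℚ) := by
      rw [hsum]
      push_cast
      nlinarith [mul_lt_mul_of_pos_left key hMq]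
    exact Int.cast_lt.mp hfin
  · rintro ⟨rfl, a0, a1, a2⟩
    simp [Finset.prod_range_succ, a0, a1, a2] at hM
    subst hM
    rw [hρ]
    simp [Finset.sum_range_succ, a0, a1, a2]
end

section
/- Let N ≥ 3 and let k_1, …, k_N be as in the context. Then ρ > 6N. -/
/-- Proposition 3.1(4): if `N ≥ 3` then `ρ > 6N`. -/
theorem rho_gt_six_N
    (N : ℕ) (hN : 3 ≤ N) (k : ℕ → ℕ)
    (hk : ∀ i < N, 1 < k i)
    (hmono : ∀ i j, i < j → j < N → k i < k j)
    (hcop : ∀ i j, i < j → j < N → Nat.Coprime (k i) (k j))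
    (M : ℕ) (hM : M = ∏ i ∈ Finset.range N, k i)
    (ρ : ℤ)
    (hρ : ρ = ((N : ℤ) - 1) * (M : ℤ) - ∑ i ∈ Finset.range N, ((M / k i : ℕ) : ℤ)) :
    6 * (N : ℤ) < ρ := by
  subst hM
  subst hρ
  induction N, hN using Nat.le_induction with
  | base =>
    have h0 := hk 0 (by norm_num)
    have h01 := hmono 0 1 (by norm_num) (by norm_num)
    have h12 := hmono 1 2 (by norm_num) (by norm_num)
    have c02 := hcop 0 2 (by norm_num) (by norm_num)
    simp only [Finset.prod_range_succ, Finset.sum_range_succ, Finset.prod_range_zero,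
      Finset.sum_range_zero, one_mul, zero_add]
    generalize k 0 = a at *
    generalize k 1 = b at *
    generalize k 2 = c at *
    have hc : 5 ≤ c := by
      by_contra h
      have hc : c = 4 := by omega
      have ha : a = 2 := by omega
      subst hc ha
      revert c02
      decide
    have e0 : a * b * c / a = b * c := by
      rw [mul_assoc]; exact Nat.mul_div_cancel_left _ (by omega)
    have e1 : a * b * c / b = a * c := by
      rw [mul_comm a b, mul_assoc]; exact Nat.mul_div_cancel_left _ (by omega)
    have e2 : a * b * c / c = a * b := Nat.mul_div_cancel _ (by omega)
    rw [e0, e1, e2]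
    obtain ⟨x, rfl⟩ := Nat.exists_eq_add_of_le (show 2 ≤ a by omega)
    obtain ⟨y, rfl⟩ := Nat.exists_eq_add_of_le (show 3 ≤ b by omega)
    obtain ⟨z, rfl⟩ := Nat.exists_eq_add_of_le hc
    push_cast
    have hx : (0 : ℤ) ≤ x := by positivity
    have hy : (0 : ℤ) ≤ y := by positivity
    have hz : (0 : ℤ) ≤ z := by positivity
    have := mul_nonneg hx hy
    have := mul_nonneg hx hz
    have := mul_nonneg hy hz
    have := mul_nonneg (mul_nonneg hx hy) hz
    ring_nf at *
    linarith
  | succ n hn ih =>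
    have ih := ih (fun i hi => hk i (by omega)) (fun i j h h' => hmono i j h (by omega))
      (fun i j h h' => hcop i j h (by omega))
    have hkn := hk n (by omega)
    rw [Finset.sum_range_succ, Finset.prod_range_succ]
    have hs : ∑ i ∈ Finset.range n, (((∏ i ∈ Finset.range n, k i) * k n / k i : ℕ) : ℤ)
        = (∑ i ∈ Finset.range n, (((∏ i ∈ Finset.range n, k i) / k i : ℕ) : ℤ)) * k n := by
      rw [Finset.sum_mul]
      refine Finset.sum_congr rfl fun i hi => ?_
      rw [← Nat.div_mul_right_comm (Finset.dvd_prod_of_mem k hi), Nat.cast_mul]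
    rw [hs, Nat.mul_div_cancel _ (by omega)]
    generalize (∑ i ∈ Finset.range n, (((∏ i ∈ Finset.range n, k i) / k i : ℕ) : ℤ)) = S at *
    generalize (∏ i ∈ Finset.range n, k i) = P at *
    generalize k n = q at *
    push_cast
    have hq : (2 : ℤ) ≤ q := by exact_mod_cast hkn
    have hP : (0 : ℤ) ≤ P := by positivity
    have hn' : (3 : ℤ) ≤ n := by exact_mod_cast hn
    have h1 := mul_nonneg hP (show (0 : ℤ) ≤ q - 1 by linarith)
    have h2 := mul_nonneg (show (0 : ℤ) ≤ (n - 1) * P - S by linarith)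
      (show (0 : ℤ) ≤ q - 2 by linarith)
    nlinarith
end

section
/- Let N ≥ 2 and let k_1, …, k_N be as in the context. Then M > 2^N · (N−1)!. -/
/-- For pairwise coprime integers `1 < k 0 < ⋯ < k (N-1)` with `N ≥ 2`,
the product `M = ∏ kᵢ` satisfies `M > 2^N · (N-1)!`. -/
theorem M_gt_two_pow_factorial
    (N : ℕ) (hN : 2 ≤ N) (k : ℕ → ℕ)
    (hk : ∀ i < N, 1 < k i)
    (hmono : ∀ i j, i < j → j < N → k i < k j)
    (hcop : ∀ i j, i < j → j < N → Nat.Coprime (k i) (k j))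
    (M : ℕ) (hM : M = ∏ i ∈ Finset.range N, k i) :
    2 ^ N * Nat.factorial (N - 1) < M := by
  have key : ∀ i, i < N → 2 * i + 1 ≤ k i ∧ (2 * i + 3 ≤ k i ∨ ∃ j, j ≤ i ∧ 2 ∣ k j) := by
    intro i
    induction i with
    | zero =>
      intro h
      have h1 := hk 0 h
      refine ⟨by omega, ?_⟩
      by_cases h3 : 3 ≤ k 0
      · left; omega
      · right; exact ⟨0, le_refl _, by omega⟩
    | succ i ih =>
      intro h
      obtain ⟨h1, h2⟩ := ih (by omega)
      have hlt := hmono i (i + 1) (by omega) h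
      rcases h2 with h2 | ⟨j, hj, hd⟩
      · refine ⟨by omega, ?_⟩
        by_cases h3 : 2 * (i + 1) + 3 ≤ k (i + 1)
        · left; exact h3
        · right; exact ⟨i + 1, le_refl _, by omega⟩
      · have hodd : ¬ 2 ∣ k (i + 1) := fun hd' =>
          Nat.not_coprime_of_dvd_of_dvd (by norm_num) hd hd' (hcop j (i + 1) (by omega) h)
        exact ⟨by omega, Or.inr ⟨j, by omega, hd⟩⟩
  have step : ∀ n, n + 1 < N → 2 ^ (n + 1) * Nat.factorial n ≤ ∏ i ∈ Finset.range (n + 1), k i →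
      2 ^ (n + 2) * Nat.factorial (n + 1) < ∏ i ∈ Finset.range (n + 2), k i := by
    intro n hn h
    rw [Finset.prod_range_succ _ (n + 1), Nat.factorial_succ]
    have h1 := (key (n + 1) hn).1
    have hpos : 0 < 2 ^ (n + 1) * Nat.factorial n := by positivity
    calc 2 ^ (n + 2) * ((n + 1) * Nat.factorial n)
        = (2 ^ (n + 1) * Nat.factorial n) * (2 * (n + 1)) := by ring
      _ < (2 ^ (n + 1) * Nat.factorial n) * k (n + 1) :=
          Nat.mul_lt_mul_of_pos_left (by omega) hpos
      _ ≤ _ := Nat.mul_le_mul_right _ h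
  have all : ∀ n, n < N → 2 ^ (n + 1) * Nat.factorial n ≤ ∏ i ∈ Finset.range (n + 1), k i := by
    intro n
    induction n with
    | zero =>
      intro h
      have := hk 0 h
      simp
      omega
    | succ n ih => exact fun h => (step n h (ih (by omega))).le
  obtain ⟨n, rfl⟩ : ∃ n, N = n + 2 := ⟨N - 2, by omega⟩
  rw [hM]
  exact step n (by omega) (all n (by omega))
end

section
/- Let N ≥ 2 and let k_1, …, k_N be as in the context. Then, as real numbers, M > 2^N · (N−1)^((N−1)/2), where the exponent (N−1)/2 is the real number (N−1)/2 and the power is a real power. -/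
/-- At most one `k i` is even, so `k i ≥ 2 i + 1`. -/
theorem k_lower_aux (N : ℕ) (k : ℕ → ℕ)
    (hk : ∀ i < N, 1 < k i)
    (hmono : ∀ i j, i < j → j < N → k i < k j)
    (hcop : ∀ i j, i < j → j < N → Nat.Coprime (k i) (k j)) :
    ∀ i, i < N → 2 * i + 1 ≤ k i ∧ ((∀ j ≤ i, k j % 2 = 1) → 2 * i + 3 ≤ k i) := by
  intro i
  induction i with
  | zero =>
    intro h
    have h1 := hk 0 h
    refine ⟨by omega, fun h2 => ?_⟩
    have := h2 0 le_rfl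
    omega
  | succ i ih =>
    intro h
    obtain ⟨h1, h2⟩ := ih (by omega)
    have h3 := hmono i (i + 1) (by omega) h
    by_cases hodd : ∀ j ≤ i, k j % 2 = 1
    · have h4 := h2 hodd
      refine ⟨by omega, fun h5 => ?_⟩
      have h6 := h5 (i + 1) le_rfl
      have h7 := hodd i le_rfl
      omega
    · refine ⟨?_, fun h5 => absurd (fun j hj => h5 j (by omega)) hodd⟩
      push Not at hodd
      obtain ⟨j, hj, hj2⟩ := hodd
      have hc := hcop j (i + 1) (by omega) h
      have h8 : k (i + 1) % 2 = 1 := by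
        by_contra h9
        have := Nat.dvd_gcd (show 2 ∣ k j by omega) (show 2 ∣ k (i + 1) by omega)
        rw [hc.gcd_eq_one] at this
        omega
      omega

/-- The squared product of the odd numbers `3, 5, …, 2n+1` exceeds `(4n)^n`. -/
theorem odd_prod_aux (n : ℕ) (hn : 1 ≤ n) :
    (4 * n) ^ n < (∏ i ∈ Finset.range n, (2 * i + 3)) ^ 2 := by
  have h1 : (∏ i ∈ Finset.range n, (2 * i + 3)) ^ 2
      = ∏ i ∈ Finset.range n, ((2 * i + 3) * (2 * (n - 1 - i) + 3)) := by
    rw [Finset.prod_mul_distrib, Finset.prod_range_reflect (fun i => 2 * i + 3) n, sq]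
  rw [h1]
  calc (4 * n) ^ n = ∏ i ∈ Finset.range n, (4 * n) := by simp
    _ < _ := by
      apply Finset.prod_lt_prod_of_nonempty
      · intro i _; omega
      · intro i hi
        have hi' := Finset.mem_range.mp hi
        obtain ⟨m, hm⟩ : ∃ m, n = i + m + 1 := ⟨n - 1 - i, by omega⟩
        have : n - 1 - i = m := by omega
        rw [this, hm]
        nlinarith [Nat.zero_le (i * m)]
      · simp; omega

/-- For pairwise coprime integers `1 < k 0 < ⋯ < k (N-1)` with `N ≥ 2`,
as real numbers `M > 2^N · (N-1)^((N-1)/2)` (real power). -/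
theorem M_gt_two_pow_rpow
    (N : ℕ) (hN : 2 ≤ N) (k : ℕ → ℕ)
    (hk : ∀ i < N, 1 < k i)
    (hmono : ∀ i j, i < j → j < N → k i < k j)
    (hcop : ∀ i j, i < j → j < N → Nat.Coprime (k i) (k j))
    (M : ℕ) (hM : M = ∏ i ∈ Finset.range N, k i) :
    (2 : ℝ) ^ N * ((N : ℝ) - 1) ^ (((N : ℝ) - 1) / 2) < (M : ℝ) := by
  obtain ⟨n, rfl⟩ : ∃ n, N = n + 1 := ⟨N - 1, by omega⟩
  have hb := k_lower_aux (n + 1) k hk hmono hcop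
  have hP : (∏ i ∈ Finset.range n, (2 * i + 3)) * 2 ≤ M := by
    rw [hM, Finset.prod_range_succ']
    apply Nat.mul_le_mul
    · apply Finset.prod_le_prod'
      intro i hi
      have := (hb (i + 1) (by have := Finset.mem_range.mp hi; omega)).1
      omega
    · exact hk 0 (by omega)
  have hO := odd_prod_aux n (by omega)
  have hMM : 4 * (4 * n) ^ n < M ^ 2 := by
    have := Nat.pow_le_pow_left hP 2
    rw [mul_pow] at this
    omega
  have hMR : (4 : ℝ) * (4 * n) ^ n < (M : ℝ) ^ 2 := by exact_mod_cast hMM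
  apply lt_of_pow_lt_pow_left₀ 2 (Nat.cast_nonneg M)
  refine lt_of_eq_of_lt ?_ hMR
  have e : (((n + 1 : ℕ) : ℝ) - 1) = n := by push_cast; ring
  have hx : (((n : ℝ)) ^ ((n : ℝ) / 2)) ^ 2 = (n : ℝ) ^ n := by
    rw [← Real.rpow_mul_natCast (Nat.cast_nonneg n)]
    rw [show (n : ℝ) / 2 * ((2 : ℕ) : ℝ) = n by push_cast; ring, Real.rpow_natCast]
  rw [e, mul_pow, hx, mul_pow, ← pow_mul, mul_comm (n + 1) 2, pow_mul]
  norm_num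
  ring
end
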